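/- Let n ≥ 1 be an integer, δ ∈ (0, n] and p ∈ (1, ∞). There exists a constant c > 0, depending only on n, δ and p, such that for every f ∈ BMO(ℝⁿ, ℋ^δ_∞) with ‖f‖_{BMO(ℝⁿ,ℋ^δ_∞)} ≠ 0, the function x ↦ exp(c f(x)/‖f‖_{BMO(ℝⁿ,ℋ^δ_∞)}) belongs to A_{p,δ}. -/

import Mathlib

open scoped ENNReal
open Set MeasureTheory

noncomputable section

/-- An axis-parallel cube in `ℝⁿ`, described by its lower corner and positive side length. -/
structure Cube (n : ℕ) where
  corner : Fin n → ℝ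
  side : ℝ
  side_pos : 0 < side

namespace Cube

/-- The half-open cube `∏ᵢ [cornerᵢ, cornerᵢ + side)` as a set of points. -/
def toSet {n : ℕ} (Q : Cube n) : Set (Fin n → ℝ) :=
  {x | ∀ i, Q.corner i ≤ x i ∧ x i < Q.corner i + Q.side}

/-- A cube is dyadic if it has the form `2^k·(z + [0,1)ⁿ)` with `k ∈ ℤ`, `z ∈ ℤⁿ`. -/
def IsDyadic {n : ℕ} (Q : Cube n) : Prop :=
  ∃ (k : ℤ) (z : Fin n → ℤ), Q.side = (2:ℝ) ^ k ∧ ∀ i, Q.corner i = (z i : ℝ) * (2:ℝ) ^ k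

/-- `Q'` is a dyadic subcube of `Q`, i.e. obtained from `Q` by repeated bisection. -/
def IsDyadicSubcube {n : ℕ} (Q' Q : Cube n) : Prop :=
  ∃ (k : ℕ) (z : Fin n → ℕ), (∀ i, z i < 2 ^ k) ∧
    Q'.side = Q.side / 2 ^ k ∧ ∀ i, Q'.corner i = Q.corner i + (z i : ℝ) * (Q.side / 2 ^ k)

/-- The concentric dilate `t·Q` of a cube. -/
def dilate {n : ℕ} (Q : Cube n) (t : ℝ) (ht : 0 < t) : Cube n :=
  ⟨fun i => Q.corner i + Q.side / 2 - t * Q.side / 2, t * Q.side, mul_pos ht Q.side_pos⟩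

end Cube

/-- The Hausdorff content `ℋ^δ_∞`. -/
def hContent (n : ℕ) (δ : ℝ) (E : Set (Fin n → ℝ)) : ℝ≥0∞ :=
  ⨅ (Qs : ℕ → Cube n) (_ : E ⊆ ⋃ i, (Qs i).toSet), ∑' i, ENNReal.ofReal ((Qs i).side ^ δ)

/-- The dyadic Hausdorff content `~ℋ^δ_∞`. -/
def dContent (n : ℕ) (δ : ℝ) (E : Set (Fin n → ℝ)) : ℝ≥0∞ :=
  ⨅ (Qs : ℕ → Cube n) (_ : (∀ i, (Qs i).IsDyadic) ∧ E ⊆ ⋃ i, (Qs i).toSet),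
    ∑' i, ENNReal.ofReal ((Qs i).side ^ δ)

/-- The Choquet integral `∫_E f dℋ^δ_∞`. -/
def integH (n : ℕ) (δ : ℝ) (f : (Fin n → ℝ) → ℝ) (E : Set (Fin n → ℝ)) : ℝ≥0∞ :=
  ∫⁻ t in Ioi (0:ℝ), hContent n δ {x | x ∈ E ∧ t < f x}

/-- The Choquet integral `∫_E f d~ℋ^δ_∞` w.r.t. the dyadic Hausdorff content. -/
def integD (n : ℕ) (δ : ℝ) (f : (Fin n → ℝ) → ℝ) (E : Set (Fin n → ℝ)) : ℝ≥0∞ :=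
  ∫⁻ t in Ioi (0:ℝ), dContent n δ {x | x ∈ E ∧ t < f x}

/-- A property holds `ℋ^δ_∞`-a.e. -/
def AEContent (n : ℕ) (δ : ℝ) (P : (Fin n → ℝ) → Prop) : Prop :=
  hContent n δ {x | ¬ P x} = 0

/-- `ℋ^δ_∞`-quasicontinuity. -/
def QuasiCont (n : ℕ) (δ : ℝ) (f : (Fin n → ℝ) → ℝ) : Prop :=
  ∀ ε : ℝ, 0 < ε → ∃ O : Set (Fin n → ℝ),
    IsOpen O ∧ hContent n δ O < ENNReal.ofReal ε ∧ ContinuousOn f Oᶜ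

/-- `L¹_loc(ℝⁿ, ℋ^δ_∞)`. -/
def MemL1loc (n : ℕ) (δ : ℝ) (f : (Fin n → ℝ) → ℝ) : Prop :=
  QuasiCont n δ f ∧ ∀ K : Set (Fin n → ℝ), IsCompact K → integH n δ (fun x => |f x|) K < ⊤

/-- `L^∞(ℝⁿ, ℋ^δ_∞)`. -/
def MemLinf (n : ℕ) (δ : ℝ) (f : (Fin n → ℝ) → ℝ) : Prop :=
  QuasiCont n δ f ∧ ∃ M : ℝ, AEContent n δ (fun x => |f x| ≤ M)

/-- The `BMO(ℝⁿ, ℋ^δ_∞)` seminorm. -/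
def bmoNorm (n : ℕ) (δ : ℝ) (f : (Fin n → ℝ) → ℝ) : ℝ≥0∞ :=
  ⨆ Q : Cube n, ⨅ c : ℝ,
    integH n δ (fun x => |f x - c|) Q.toSet / hContent n δ Q.toSet

/-- Membership in `BMO(ℝⁿ, ℋ^δ_∞)`. -/
def MemBMO (n : ℕ) (δ : ℝ) (f : (Fin n → ℝ) → ℝ) : Prop :=
  MemL1loc n δ f ∧ bmoNorm n δ f < ⊤

/-- `essinf_{x ∈ Q} f := inf {t ∈ (0,∞) : ℋ^δ_∞({x ∈ Q : f x < t}) > 0}`. -/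
def essInfQ (n : ℕ) (δ : ℝ) (f : (Fin n → ℝ) → ℝ) (Q : Cube n) : ℝ :=
  sInf {t : ℝ | 0 < t ∧ 0 < hContent n δ {x | x ∈ Q.toSet ∧ f x < t}}

/-- The `BLO(ℝⁿ, ℋ^δ_∞)` seminorm. -/
def bloNorm (n : ℕ) (δ : ℝ) (f : (Fin n → ℝ) → ℝ) : ℝ≥0∞ :=
  ⨆ Q : Cube n,
    integH n δ (fun x => |f x - essInfQ n δ f Q|) Q.toSet / hContent n δ Q.toSet

/-- Membership in `BLO(ℝⁿ, ℋ^δ_∞)`. -/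
def MemBLO (n : ℕ) (δ : ℝ) (f : (Fin n → ℝ) → ℝ) : Prop :=
  MemL1loc n δ f ∧ bloNorm n δ f < ⊤

/-- A weight: locally Choquet-integrable, quasicontinuous, positive `ℋ^δ_∞`-a.e. -/
def IsWeight (n : ℕ) (δ : ℝ) (w : (Fin n → ℝ) → ℝ) : Prop :=
  MemL1loc n δ w ∧ AEContent n δ (fun x => 0 < w x)

/-- The capacitary Muckenhoupt `A_{p,δ}` constant, for `p > 1`. -/
def apConst (n : ℕ) (δ p : ℝ) (w : (Fin n → ℝ) → ℝ) : ℝ≥0∞ :=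
  ⨆ Q : Cube n,
    (integH n δ w Q.toSet / hContent n δ Q.toSet) *
      (integH n δ (fun x => w x ^ (-(1 / (p - 1)))) Q.toSet / hContent n δ Q.toSet) ^ (p - 1)

/-- Membership in `A_{p,δ}`, `p > 1`. -/
def MemAp (n : ℕ) (δ p : ℝ) (w : (Fin n → ℝ) → ℝ) : Prop :=
  IsWeight n δ w ∧ apConst n δ p w < ⊤

/-- The Hardy–Littlewood maximal operator w.r.t. `ℋ^δ_∞`. -/
def maxOp (n : ℕ) (δ : ℝ) (g : (Fin n → ℝ) → ℝ) (x : Fin n → ℝ) : ℝ≥0∞ :=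
  ⨆ (Q : Cube n) (_ : x ∈ Q.toSet),
    integH n δ (fun y => |g y|) Q.toSet / hContent n δ Q.toSet

/-- The capacitary `A_{1,δ}` constant. -/
def a1Const (n : ℕ) (δ : ℝ) (w : (Fin n → ℝ) → ℝ) : ℝ≥0∞ :=
  sInf {c : ℝ≥0∞ | 0 < c ∧
    AEContent n δ (fun x => maxOp n δ w x ≤ c * ENNReal.ofReal (w x))}

/-- Membership in `A_{1,δ}`. -/
def MemA1 (n : ℕ) (δ : ℝ) (w : (Fin n → ℝ) → ℝ) : Prop :=
  IsWeight n δ w ∧ a1Const n δ w < ⊤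

/-- The `A_{p,δ}` constant for `p ∈ [1,∞)` (it is the `A_{1,δ}` constant when `p = 1`). -/
def apConstGen (n : ℕ) (δ p : ℝ) (w : (Fin n → ℝ) → ℝ) : ℝ≥0∞ :=
  if p = 1 then a1Const n δ w else apConst n δ p w

/-- Membership in `A_{p,δ}` for `p ∈ [1,∞)` (meaning `A_{1,δ}` when `p = 1`). -/
def MemApGen (n : ℕ) (δ p : ℝ) (w : (Fin n → ℝ) → ℝ) : Prop :=
  IsWeight n δ w ∧ apConstGen n δ p w < ⊤

/-- The weighted `BMO^q_w(ℝⁿ, ℋ^δ_∞)` seminorm. -/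
def bmoWNorm (n : ℕ) (δ q : ℝ) (w f : (Fin n → ℝ) → ℝ) : ℝ≥0∞ :=
  ⨆ Q : Cube n, ⨅ c : ℝ,
    (integH n δ (fun x => |f x - c| ^ q * w x) Q.toSet / integH n δ w Q.toSet) ^ (1 / q)

/-- Membership in `BMO^q_w(ℝⁿ, ℋ^δ_∞)`. -/
def MemBMOw (n : ℕ) (δ q : ℝ) (w f : (Fin n → ℝ) → ℝ) : Prop :=
  QuasiCont n δ f ∧
    (∀ K : Set (Fin n → ℝ), IsCompact K → integH n δ (fun x => |f x| ^ q * w x) K < ⊤) ∧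
    bmoWNorm n δ q w f < ⊤

/-- The integral average `f_{Q,δ}` with respect to the dyadic Hausdorff content. -/
def avgQ (n : ℕ) (δ : ℝ) (f : (Fin n → ℝ) → ℝ) (Q : Cube n) : ℝ :=
  ((integD n δ f (Q.toSet ∩ {x | 0 ≤ f x})).toReal -
      (integD n δ (fun x => -f x) (Q.toSet ∩ {x | f x < 0})).toReal) /
    ((dContent n δ (Q.toSet ∩ {x | 0 ≤ f x})).toReal +
      (dContent n δ (Q.toSet ∩ {x | f x < 0})).toReal)

/-!
The content `ℋ^δ_∞` is only subadditive, so the Calderón–Zygmund decomposition of a set `E ⊆ Q` is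
run on a measure instead: put the mass `ℓ(C)^δ` at one point of each cube `C` of a near-optimal
cover of `E` by dyadic subcubes of `Q`, and stop at the parents of the maximal dyadic subcubes `P`
whose mass is comparable to `ℓ(P)^δ`. If `ℋ^δ_∞(E)` is small relative to `ℓ(Q)^δ`, the stopping
cubes cover `E`, have small total content, and each is filled by `E` only up to a quarter of its
content.

Applied to `E = {x ∈ Q | t < |f x - c_Q|}` with `t` a large multiple of `‖f‖`, the last property
gives `|c_P - c_Q| ≲ t`. Iterating over generations of stopping cubes makes the content of
`{x ∈ Q | t < |f x - c_Q|}` decay exponentially in `t / ‖f‖`, which is the John–Nirenberg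
inequality. Hence, for small `β`, the averages over `Q` of `exp (β f)` and `exp (-β f / (p - 1))`
are bounded by multiples of `exp (β c_Q)` and `exp (-β c_Q / (p - 1))`, and `c_Q` cancels in the
`A_{p,δ}` product.
-/

section Gauge

variable {n : ℕ} {δ : ℝ}

namespace Cube

/-- The gauge `ℓ(Q)^δ`: the cost of `Q` in a cover competing for `ℋ^δ_∞`. -/
def gauge (δ : ℝ) (Q : Cube n) : ℝ≥0∞ := ENNReal.ofReal (Q.side ^ δ)

lemma gauge_ne_zero (Q : Cube n) : Q.gauge δ ≠ 0 :=
  (ENNReal.ofReal_pos.2 (Real.rpow_pos_of_pos Q.side_pos δ)).ne'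

lemma gauge_ne_top (Q : Cube n) : Q.gauge δ ≠ ⊤ := ENNReal.ofReal_ne_top

lemma gauge_le_mul_gauge (hδ : 0 ≤ δ) {t : ℝ} (ht : 0 ≤ t) {P Q : Cube n}
    (h : P.side ≤ t * Q.side) : P.gauge δ ≤ ENNReal.ofReal (t ^ δ) * Q.gauge δ := by
  rw [gauge, gauge, ← ENNReal.ofReal_mul (by positivity), ← Real.mul_rpow ht Q.side_pos.le]
  exact ENNReal.ofReal_le_ofReal (Real.rpow_le_rpow P.side_pos.le h hδ)

lemma gauge_mono (hδ : 0 ≤ δ) {P Q : Cube n} (h : P.side ≤ Q.side) : P.gauge δ ≤ Q.gauge δ :=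
  ENNReal.ofReal_le_ofReal (Real.rpow_le_rpow P.side_pos.le h hδ)

lemma toSet_eq_pi (Q : Cube n) :
    Q.toSet = univ.pi fun i => Ico (Q.corner i) (Q.corner i + Q.side) := by
  ext x
  simp [toSet]

lemma measurableSet_toSet (Q : Cube n) : MeasurableSet Q.toSet := by
  rw [toSet_eq_pi]
  exact MeasurableSet.univ_pi fun _ => measurableSet_Ico

lemma corner_mem_toSet (Q : Cube n) : Q.corner ∈ Q.toSet :=
  fun i => ⟨le_rfl, lt_add_of_pos_right (Q.corner i) Q.side_pos⟩

lemma gauge_eq_mul_volume (Q : Cube n) :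
    Q.gauge δ = ENNReal.ofReal (Q.side ^ (δ - n)) * volume Q.toSet := by
  have hQ := Q.side_pos
  have hvolume : volume Q.toSet = ENNReal.ofReal (Q.side ^ (n : ℝ)) := by
    simp [toSet_eq_pi, Real.volume_pi_Ico, ENNReal.ofReal_pow hQ.le]
  rw [hvolume, ← ENNReal.ofReal_mul (by positivity), ← Real.rpow_add hQ, sub_add_cancel, gauge]

/-- Once all covering cubes are smaller than `Q`, the gauge dominates a fixed multiple of the
volume because `δ ≤ n`, and the bound follows from countable subadditivity of the volume. -/
lemma gauge_le_tsum_gauge (hδ : 0 ≤ δ) (hδn : δ ≤ n) {ι : Type*} [Countable ι] {Q : Cube n}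
    {R : ι → Cube n} (hQR : Q.toSet ⊆ ⋃ i, (R i).toSet) :
    Q.gauge δ ≤ ∑' i, (R i).gauge δ := by
  by_cases hbig : ∃ i, Q.side ≤ (R i).side
  · obtain ⟨i, hi⟩ := hbig
    exact (gauge_mono hδ hi).trans (ENNReal.le_tsum i)
  push Not at hbig
  have hgauge (i : ι) :
      ENNReal.ofReal (Q.side ^ (δ - n)) * volume (R i).toSet ≤ (R i).gauge δ := by
    rw [gauge_eq_mul_volume]
    gcongr ENNReal.ofReal ?_ * _
    exact Real.rpow_le_rpow_of_nonpos (R i).side_pos (hbig i).le (by linarith)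
  calc Q.gauge δ = ENNReal.ofReal (Q.side ^ (δ - n)) * volume Q.toSet := gauge_eq_mul_volume Q
    _ ≤ ENNReal.ofReal (Q.side ^ (δ - n)) * ∑' i, volume (R i).toSet := by
        gcongr
        exact (measure_mono hQR).trans (measure_iUnion_le _)
    _ ≤ ∑' i, (R i).gauge δ := by
        rw [← ENNReal.tsum_mul_left]
        exact ENNReal.tsum_le_tsum hgauge

end Cube

end Gauge

section Content

variable {n : ℕ} {δ : ℝ}

lemma exists_cubes_tsum_gauge_lt (n : ℕ) (hδ : δ ≠ 0) {ε : ℝ≥0∞} (hε : ε ≠ 0) :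
    ∃ Q : ℕ → Cube n, ∑' i, (Q i).gauge δ < ε := by
  obtain ⟨e, he, hsum⟩ := ENNReal.exists_pos_sum_of_countable hε ℕ
  refine ⟨fun i => ⟨0, (e i : ℝ) ^ (1 / δ), Real.rpow_pos_of_pos (he i) _⟩, ?_⟩
  simpa [Cube.gauge, ← Real.rpow_mul, hδ] using hsum

lemma exists_cover_of_hContent_lt {E : Set (Fin n → ℝ)} {a : ℝ≥0∞} (h : hContent n δ E < a) :
    ∃ Q : ℕ → Cube n, E ⊆ (⋃ i, (Q i).toSet) ∧ ∑' i, (Q i).gauge δ < a := by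
  simpa only [hContent, iInf_lt_iff, exists_prop, Cube.gauge] using h

lemma hContent_mono {E F : Set (Fin n → ℝ)} (h : E ⊆ F) : hContent n δ E ≤ hContent n δ F :=
  le_iInf₂ fun Q hQ => iInf₂_le Q (h.trans hQ)

/-- The definition of `hContent` only admits covers indexed by `ℕ`; a finite one is padded with
cubes of arbitrarily small total gauge. -/
lemma hContent_le_tsum (hδ : δ ≠ 0) {ι : Type*} [Countable ι] {Q : ι → Cube n}
    {E : Set (Fin n → ℝ)} (hE : E ⊆ ⋃ i, (Q i).toSet) :
    hContent n δ E ≤ ∑' i, (Q i).gauge δ := by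
  refine ENNReal.le_of_forall_pos_le_add fun ε hε _ => ?_
  obtain ⟨R, hR⟩ := exists_cubes_tsum_gauge_lt n hδ (ENNReal.coe_ne_zero.2 hε.ne')
  obtain ⟨_⟩ := nonempty_denumerable (ι ⊕ ℕ)
  let e : ℕ ≃ ι ⊕ ℕ := (Denumerable.eqv (ι ⊕ ℕ)).symm
  let QR : ι ⊕ ℕ → Cube n := Sum.elim Q R
  have hcover : E ⊆ ⋃ i, (QR (e i)).toSet := by
    rw [e.surjective.iUnion_comp fun i => (QR i).toSet, iUnion_sum]
    exact hE.trans subset_union_left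
  calc hContent n δ E ≤ ∑' i, (QR (e i)).gauge δ := iInf₂_le (fun i => QR (e i)) hcover
    _ = ∑' i, (QR i).gauge δ := e.tsum_eq fun i => (QR i).gauge δ
    _ = ∑' i, (Q i).gauge δ + ∑' i, (R i).gauge δ :=
        Summable.tsum_sum ENNReal.summable ENNReal.summable
    _ ≤ ∑' i, (Q i).gauge δ + ε := by gcongr

lemma hContent_empty (n : ℕ) (hδ : δ ≠ 0) : hContent n δ ∅ = 0 := by
  simpa using hContent_le_tsum (n := n) hδ (Q := fun i : Empty => i.elim) (empty_subset _)

lemma hContent_iUnion_nat_le (hδ : δ ≠ 0) (E : ℕ → Set (Fin n → ℝ)) :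
    hContent n δ (⋃ i, E i) ≤ ∑' i, hContent n δ (E i) := by
  refine ENNReal.le_of_forall_pos_le_add fun ε hε hfin => ?_
  obtain ⟨e, he, hsum⟩ :=
    ENNReal.exists_pos_sum_of_countable (ENNReal.coe_ne_zero.2 hε.ne') ℕ
  choose Q hQ hQsum using fun i => exists_cover_of_hContent_lt
    (ENNReal.lt_add_right (ENNReal.ne_top_of_tsum_ne_top hfin.ne i)
      (ENNReal.coe_ne_zero.2 (he i).ne'))
  have hcover : ⋃ i, E i ⊆ ⋃ q : ℕ × ℕ, (Q q.1 q.2).toSet := by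
    rw [iUnion_prod']
    exact iUnion_mono hQ
  calc hContent n δ (⋃ i, E i) ≤ ∑' q : ℕ × ℕ, (Q q.1 q.2).gauge δ := hContent_le_tsum hδ hcover
    _ = ∑' i, ∑' j, (Q i j).gauge δ := ENNReal.tsum_prod (f := fun i j => (Q i j).gauge δ)
    _ ≤ ∑' i, (hContent n δ (E i) + e i) := ENNReal.tsum_le_tsum fun i => (hQsum i).le
    _ = ∑' i, hContent n δ (E i) + ∑' i, (e i : ℝ≥0∞) := ENNReal.tsum_add
    _ ≤ ∑' i, hContent n δ (E i) + ε := by gcongr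

/-- `ℋ^δ_∞` bundled as an outer measure, which gives access to the library's subadditivity
lemmas. -/
def contentOuterMeasure (n : ℕ) (hδ : δ ≠ 0) : OuterMeasure (Fin n → ℝ) where
  measureOf := hContent n δ
  empty := hContent_empty n hδ
  mono := hContent_mono
  iUnion_nat E _ := hContent_iUnion_nat_le hδ E

lemma hContent_union_le (hδ : δ ≠ 0) (E F : Set (Fin n → ℝ)) :
    hContent n δ (E ∪ F) ≤ hContent n δ E + hContent n δ F :=
  measure_union_le (μ := contentOuterMeasure n hδ) E F

lemma hContent_biUnion_le (hδ : δ ≠ 0) {ι : Type*} {I : Set ι} (hI : I.Countable)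
    (E : ι → Set (Fin n → ℝ)) :
    hContent n δ (⋃ i ∈ I, E i) ≤ ∑' i : I, hContent n δ (E i) :=
  measure_biUnion_le (contentOuterMeasure n hδ) hI E

lemma hContent_toSet (hδ : 0 < δ) (hδn : δ ≤ n) (Q : Cube n) :
    hContent n δ Q.toSet = Q.gauge δ := by
  refine le_antisymm ?_ (le_iInf₂ fun R hR => Cube.gauge_le_tsum_gauge hδ.le hδn hR)
  simpa using hContent_le_tsum hδ.ne' (Q := fun _ : Unit => Q) (subset_iUnion_of_subset () le_rfl)

end Content

section Grid

variable {n : ℕ} {δ : ℝ}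

namespace Cube

/-- The cube with index `z` among the cubes of side `ℓ(Q) / 2 ^ k` tiling `ℝⁿ` from the corner of
`Q`. All `z : Fin n → ℤ` are allowed, so that these cubes are the dyadic subcubes of `Q` together
with their translates outside `Q`. -/
def gridCube (Q : Cube n) (k : ℕ) (z : Fin n → ℤ) : Cube n where
  corner i := Q.corner i + z i * (Q.side / 2 ^ k)
  side := Q.side / 2 ^ k
  side_pos := div_pos Q.side_pos (by positivity)

/-- The index of the level `k` grid cube of `Q` containing `x`. -/
def gridIndex (Q : Cube n) (k : ℕ) (x : Fin n → ℝ) : Fin n → ℤ :=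
  fun i => ⌊(x i - Q.corner i) / (Q.side / 2 ^ k)⌋

/-- The level `k` grid cube of `Q` containing `x`. -/
def gridCubeAt (Q : Cube n) (k : ℕ) (x : Fin n → ℝ) : Cube n :=
  Q.gridCube k (Q.gridIndex k x)

/-- The grid cubes of `Q` of all levels. -/
def gridCubes (Q : Cube n) : Set (Cube n) :=
  range fun q : ℕ × (Fin n → ℤ) => Q.gridCube q.1 q.2

lemma countable_gridCubes (Q : Cube n) : Q.gridCubes.Countable := countable_range _

lemma mem_gridCube_iff {Q : Cube n} {k : ℕ} {z : Fin n → ℤ} {x : Fin n → ℝ} :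
    x ∈ (Q.gridCube k z).toSet ↔ Q.gridIndex k x = z := by
  have hside : 0 < Q.side / 2 ^ k := (Q.gridCube k z).side_pos
  rw [funext_iff]
  refine forall_congr' fun i => ?_
  rw [gridIndex, Int.floor_eq_iff, le_div_iff₀ hside, div_lt_iff₀ hside, add_one_mul]
  simp only [gridCube]
  rw [le_sub_iff_add_le', sub_lt_iff_lt_add', add_assoc]

lemma mem_gridCubeAt (Q : Cube n) (k : ℕ) (x : Fin n → ℝ) : x ∈ (Q.gridCubeAt k x).toSet :=
  mem_gridCube_iff.2 rfl

lemma gridCube_eq_gridCubeAt {Q : Cube n} {k : ℕ} {z : Fin n → ℤ} {x : Fin n → ℝ}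
    (hx : x ∈ (Q.gridCube k z).toSet) : Q.gridCube k z = Q.gridCubeAt k x := by
  rw [gridCubeAt, mem_gridCube_iff.1 hx]

lemma gridIndex_eq_gridIndex_succ_div_two (Q : Cube n) (k : ℕ) (x : Fin n → ℝ) (i : Fin n) :
    Q.gridIndex k x i = Q.gridIndex (k + 1) x i / 2 := by
  have hhalf : (x i - Q.corner i) / (Q.side / 2 ^ k) =
      (x i - Q.corner i) / (Q.side / 2 ^ (k + 1)) / (2 : ℕ) := by
    rw [pow_succ]
    push_cast
    field_simp
  rw [gridIndex, hhalf, Int.floor_div_natCast]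
  rfl

lemma gridIndex_eq_of_le {Q : Cube n} {j k : ℕ} (hjk : j ≤ k) {x y : Fin n → ℝ}
    (h : Q.gridIndex k x = Q.gridIndex k y) : Q.gridIndex j x = Q.gridIndex j y := by
  induction k, hjk using Nat.le_induction with
  | base => exact h
  | succ k _ ih =>
    refine ih (funext fun i => ?_)
    rw [gridIndex_eq_gridIndex_succ_div_two, h, ← gridIndex_eq_gridIndex_succ_div_two]

lemma gridCubeAt_eq_of_mem {Q : Cube n} {j k : ℕ} (hjk : j ≤ k) {x y : Fin n → ℝ}
    (hy : y ∈ (Q.gridCubeAt k x).toSet) : Q.gridCubeAt j y = Q.gridCubeAt j x := by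
  rw [gridCubeAt, gridIndex_eq_of_le hjk (mem_gridCube_iff.1 hy), ← gridCubeAt]

lemma gridCubeAt_subset_of_le (Q : Cube n) {j k : ℕ} (hjk : j ≤ k) (x : Fin n → ℝ) :
    (Q.gridCubeAt k x).toSet ⊆ (Q.gridCubeAt j x).toSet := fun y hy => by
  rw [← gridCubeAt_eq_of_mem hjk hy]
  exact Q.mem_gridCubeAt j y

lemma gridCube_zero (Q : Cube n) : Q.gridCube 0 0 = Q := by
  simp [gridCube]

lemma gridCubeAt_zero {Q : Cube n} {x : Fin n → ℝ} (hx : x ∈ Q.toSet) : Q.gridCubeAt 0 x = Q := by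
  rw [← Q.gridCube_zero] at hx
  rw [← gridCube_eq_gridCubeAt hx, gridCube_zero]

lemma gridCubeAt_subset {Q : Cube n} (k : ℕ) {x : Fin n → ℝ} (hx : x ∈ Q.toSet) :
    (Q.gridCubeAt k x).toSet ⊆ Q.toSet := by
  simpa only [gridCubeAt_zero hx] using Q.gridCubeAt_subset_of_le k.zero_le x

lemma gauge_gridCubeAt_le_succ (hδ : 0 ≤ δ) (Q : Cube n) (k : ℕ) (x : Fin n → ℝ) :
    (Q.gridCubeAt k x).gauge δ ≤ ENNReal.ofReal (2 ^ δ) * (Q.gridCubeAt (k + 1) x).gauge δ := by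
  refine gauge_le_mul_gauge hδ zero_le_two (le_of_eq ?_)
  simp only [gridCubeAt, gridCube, pow_succ]
  field_simp

lemma exists_side_le_div_two_pow {Q R : Cube n} (h : R.side ≤ Q.side) :
    ∃ k : ℕ, R.side ≤ Q.side / 2 ^ k ∧ Q.side / 2 ^ k ≤ 2 * R.side := by
  have hR := R.side_pos
  obtain ⟨k, hk, hk'⟩ := exists_nat_pow_near ((one_le_div hR).2 h) one_lt_two
  refine ⟨k, ?_, ?_⟩
  · rwa [le_div_comm₀ hR (by positivity)]
  · rw [div_le_iff₀ (by positivity)]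
    rw [div_lt_iff₀ hR, pow_succ] at hk'
    linarith

lemma gridIndex_mem_Icc {Q R : Cube n} {k : ℕ} (h : R.side ≤ Q.side / 2 ^ k) {x : Fin n → ℝ}
    (hx : x ∈ R.toSet) :
    Q.gridIndex k x ∈ Finset.Icc (Q.gridIndex k R.corner) (Q.gridIndex k R.corner + 1) := by
  have hside : 0 < Q.side / 2 ^ k := R.side_pos.trans_le h
  refine Finset.mem_Icc.2 ⟨fun i => ?_, fun i => ?_⟩
  · refine Int.floor_le_floor ?_
    gcongr
    exact (hx i).1
  · simp only [gridIndex, Pi.add_apply, Pi.one_apply]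
    rw [← Int.floor_add_one, div_add_one hside.ne']
    refine Int.floor_le_floor ?_
    gcongr
    linarith [(hx i).2]

/-- A cube meets at most two grid intervals of a comparable side in each of the `n` coordinate
directions, hence the factor `2 ^ n`. -/
lemma exists_finset_gridCubes_cover (hδ : 0 ≤ δ) {Q R : Cube n} (h : R.side ≤ Q.side) :
    ∃ D : Finset (Cube n), ↑D ⊆ Q.gridCubes ∧ R.toSet ⊆ (⋃ P ∈ D, P.toSet) ∧
      ∑ P ∈ D, P.gauge δ ≤ 2 ^ n * ENNReal.ofReal (2 ^ δ) * R.gauge δ := by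
  classical
  obtain ⟨k, hk, hk'⟩ := exists_side_le_div_two_pow h
  let indices := Finset.Icc (Q.gridIndex k R.corner) (Q.gridIndex k R.corner + 1)
  have hcard : (indices.image (Q.gridCube k)).card ≤ 2 ^ n :=
    Finset.card_image_le.trans (by simp [indices, Pi.card_Icc, add_assoc])
  refine ⟨indices.image (Q.gridCube k), ?_, fun x hx => ?_, ?_⟩
  · simp only [Finset.coe_image, image_subset_iff]
    exact fun z _ => ⟨(k, z), rfl⟩
  · exact mem_biUnion (Finset.mem_image_of_mem _ (gridIndex_mem_Icc hk hx)) (Q.mem_gridCubeAt k x)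
  · have hgauge : ∀ P ∈ indices.image (Q.gridCube k),
        P.gauge δ ≤ ENNReal.ofReal (2 ^ δ) * R.gauge δ := by
      simp only [Finset.forall_mem_image]
      exact fun z _ => gauge_le_mul_gauge hδ zero_le_two hk'
    calc ∑ P ∈ indices.image (Q.gridCube k), P.gauge δ
        ≤ (indices.image (Q.gridCube k)).card • (ENNReal.ofReal (2 ^ δ) * R.gauge δ) :=
          Finset.sum_le_card_nsmul _ _ _ hgauge
      _ ≤ 2 ^ n * (ENNReal.ofReal (2 ^ δ) * R.gauge δ) := by
          rw [nsmul_eq_mul]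
          gcongr
          exact_mod_cast hcard
      _ = 2 ^ n * ENNReal.ofReal (2 ^ δ) * R.gauge δ := (mul_assoc _ _ _).symm

lemma exists_gridCubes_cover (hδ : 0 ≤ δ) {Q : Cube n} {ι : Type*} {R : ι → Cube n}
    (h : ∀ i, (R i).side ≤ Q.side) :
    ∃ D ⊆ Q.gridCubes, (⋃ i, (R i).toSet) ⊆ (⋃ P ∈ D, P.toSet) ∧
      ∑' P : D, P.1.gauge δ ≤ 2 ^ n * ENNReal.ofReal (2 ^ δ) * ∑' i, (R i).gauge δ := by
  choose D hgrid hcover hsum using fun i => exists_finset_gridCubes_cover hδ (h i)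
  refine ⟨⋃ i, ↑(D i), iUnion_subset hgrid, iUnion_subset fun i => (hcover i).trans ?_, ?_⟩
  · exact biUnion_subset_biUnion_left (subset_iUnion (fun i => (D i : Set (Cube n))) i)
  · calc ∑' P : ⋃ i, (D i : Set (Cube n)), P.1.gauge δ
        ≤ ∑' i, ∑' P : (D i : Set (Cube n)), P.1.gauge δ :=
          ENNReal.tsum_iUnion_le_tsum (gauge δ) fun i => (D i : Set (Cube n))
      _ ≤ ∑' i, 2 ^ n * ENNReal.ofReal (2 ^ δ) * (R i).gauge δ :=
          ENNReal.tsum_le_tsum fun i => (Finset.tsum_subtype' (D i) (gauge δ)).trans_le (hsum i)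
      _ = 2 ^ n * ENNReal.ofReal (2 ^ δ) * ∑' i, (R i).gauge δ := ENNReal.tsum_mul_left

end Cube

end Grid

section StoppingCubes

variable {n : ℕ} {δ : ℝ}

namespace Cube

variable {Q P D : Cube n} {μ : Measure (Fin n → ℝ)}

/-- The levels of the grid cubes of `Q` around `x` that are heavy for `μ`: their gauge is at most
their mass. -/
def heavyLevels (Q : Cube n) (δ : ℝ) (μ : Measure (Fin n → ℝ)) (x : Fin n → ℝ) : Set ℕ :=
  {k | (Q.gridCubeAt k x).gauge δ ≤ μ (Q.gridCubeAt k x).toSet}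

/-- The Calderón–Zygmund stopping cubes of `μ` in `Q`: the parents of the maximal heavy dyadic
subcubes of `Q`. Taking parents makes the stopping cubes themselves light, so that the two bounds
`not_heavy_of_mem_stoppingCubes` and `tsum_gauge_stoppingCubes_le` hold together. -/
def stoppingCubes (Q : Cube n) (δ : ℝ) (μ : Measure (Fin n → ℝ)) : Set (Cube n) :=
  {P | ∃ k, ∃ x ∈ Q.toSet, IsLeast (Q.heavyLevels δ μ x) (k + 1) ∧ P = Q.gridCubeAt k x}

lemma countable_stoppingCubes (Q : Cube n) (δ : ℝ) (μ : Measure (Fin n → ℝ)) :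
    (Q.stoppingCubes δ μ).Countable := by
  refine Q.countable_gridCubes.mono ?_
  rintro _ ⟨k, x, -, -, rfl⟩
  exact ⟨(k, Q.gridIndex k x), rfl⟩

lemma toSet_subset_of_mem_stoppingCubes (hP : P ∈ Q.stoppingCubes δ μ) : P.toSet ⊆ Q.toSet := by
  obtain ⟨k, x, hx, -, rfl⟩ := hP
  exact gridCubeAt_subset k hx

lemma mem_heavyLevels_iff_of_mem {j k : ℕ} (hjk : j ≤ k) {x y : Fin n → ℝ}
    (hy : y ∈ (Q.gridCubeAt k x).toSet) : j ∈ Q.heavyLevels δ μ y ↔ j ∈ Q.heavyLevels δ μ x := by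
  rw [heavyLevels, mem_ofPred_eq, gridCubeAt_eq_of_mem hjk hy]
  rfl

lemma isLeast_heavyLevels_of_mem {k : ℕ} {x y : Fin n → ℝ} (h : IsLeast (Q.heavyLevels δ μ x) k)
    (hy : y ∈ (Q.gridCubeAt k x).toSet) : IsLeast (Q.heavyLevels δ μ y) k := by
  refine ⟨(mem_heavyLevels_iff_of_mem le_rfl hy).2 h.1, fun j hj => ?_⟩
  by_contra! hjk
  exact hjk.not_ge (h.2 ((mem_heavyLevels_iff_of_mem hjk.le hy).1 hj))

lemma exists_mem_stoppingCubes (hQ : μ Q.toSet < Q.gauge δ) {x : Fin n → ℝ} (hx : x ∈ Q.toSet)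
    (hheavy : (Q.heavyLevels δ μ x).Nonempty) : ∃ P ∈ Q.stoppingCubes δ μ, x ∈ P.toSet := by
  obtain ⟨m, hm⟩ : ∃ m, IsLeast (Q.heavyLevels δ μ x) m :=
    ⟨sInf (Q.heavyLevels δ μ x), isLeast_csInf hheavy⟩
  obtain ⟨k, rfl⟩ : ∃ k, m = k + 1 := by
    refine Nat.exists_eq_succ_of_ne_zero ?_
    rintro rfl
    have hQheavy := hm.1
    rw [heavyLevels, mem_ofPred_eq, gridCubeAt_zero hx] at hQheavy
    exact hQ.not_ge hQheavy
  exact ⟨_, ⟨k, x, hx, hm, rfl⟩, Q.mem_gridCubeAt k x⟩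

lemma not_heavy_of_mem_stoppingCubes (hP : P ∈ Q.stoppingCubes δ μ) : μ P.toSet < P.gauge δ := by
  obtain ⟨k, x, -, hleast, rfl⟩ := hP
  by_contra! hheavy
  exact k.lt_succ_self.not_ge (hleast.2 hheavy)

lemma subset_of_heavy_of_mem_stoppingCubes (hP : P ∈ Q.stoppingCubes δ μ) (hD : D ∈ Q.gridCubes)
    (hheavy : D.gauge δ ≤ μ D.toSet) {y : Fin n → ℝ} (hyD : y ∈ D.toSet) (hyP : y ∈ P.toSet) :
    D.toSet ⊆ P.toSet := by
  obtain ⟨k, x, -, hleast, rfl⟩ := hP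
  obtain ⟨⟨j, z⟩, rfl⟩ := hD
  simp only [gridCube_eq_gridCubeAt hyD] at hheavy ⊢
  rw [← gridCubeAt_eq_of_mem le_rfl hyP]
  refine Q.gridCubeAt_subset_of_le ?_ y
  by_contra! hjk
  have hj : j ∈ Q.heavyLevels δ μ x := (mem_heavyLevels_iff_of_mem hjk.le hyP).1 hheavy
  exact (hleast.2 hj).not_gt (hjk.trans k.lt_succ_self)

/-- The heavy children of distinct stopping cubes are disjoint, so their gauges add up to at most
the mass of `Q`. -/
lemma tsum_gauge_stoppingCubes_le (hδ : 0 ≤ δ) (Q : Cube n) (μ : Measure (Fin n → ℝ)) :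
    ∑' P : Q.stoppingCubes δ μ, P.1.gauge δ ≤ ENNReal.ofReal (2 ^ δ) * μ Q.toSet := by
  have := (Q.countable_stoppingCubes δ μ).to_subtype
  choose k x hxQ hleast hP using fun P : Q.stoppingCubes δ μ => P.2
  let child (P : Q.stoppingCubes δ μ) : Cube n := Q.gridCubeAt (k P + 1) (x P)
  have hdisjoint : Pairwise (Function.onFun Disjoint fun P => (child P).toSet) := by
    intro P P' hne
    refine disjoint_left.2 fun y hy hy' => hne (Subtype.ext ?_)
    have hk : k P = k P' := Nat.succ_injective <|
      (isLeast_heavyLevels_of_mem (hleast P) hy).unique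
        (isLeast_heavyLevels_of_mem (hleast P') hy')
    rw [hP P, hP P', ← gridCubeAt_eq_of_mem (k P).le_succ hy,
      ← gridCubeAt_eq_of_mem (k P').le_succ hy', hk]
  calc ∑' P : Q.stoppingCubes δ μ, P.1.gauge δ
      ≤ ∑' P, ENNReal.ofReal (2 ^ δ) * μ (child P).toSet := by
        refine ENNReal.tsum_le_tsum fun P => ?_
        rw [hP P]
        refine (gauge_gridCubeAt_le_succ hδ Q (k P) (x P)).trans ?_
        gcongr
        exact (hleast P).1
    _ = ENNReal.ofReal (2 ^ δ) * ∑' P, μ (child P).toSet := ENNReal.tsum_mul_left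
    _ ≤ ENNReal.ofReal (2 ^ δ) * μ Q.toSet := by
        gcongr
        refine (tsum_meas_le_meas_iUnion_of_disjoint μ
          (fun P => (child P).measurableSet_toSet) hdisjoint).trans (measure_mono ?_)
        exact iUnion_subset fun P => gridCubeAt_subset _ (hxQ P)

end Cube

end StoppingCubes

section SparseCover

variable {n : ℕ} {δ : ℝ}

/-- The measure placing the mass `ℓ(P)^δ` at the corner of each cube `P` of a family `D`. -/
def coverMeasure (δ : ℝ) (D : Set (Cube n)) : Measure (Fin n → ℝ) :=
  Measure.sum fun P : D => P.1.gauge δ • Measure.dirac P.1.corner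

lemma coverMeasure_univ (δ : ℝ) (D : Set (Cube n)) :
    coverMeasure δ D univ = ∑' P : D, P.1.gauge δ := by
  simp [coverMeasure, Measure.sum_apply]

lemma tsum_gauge_le_coverMeasure {D D' : Set (Cube n)} (hD' : D' ⊆ D) {A : Set (Fin n → ℝ)}
    (hA : MeasurableSet A) (hsubset : ∀ P ∈ D', P.toSet ⊆ A) :
    ∑' P : D', P.1.gauge δ ≤ coverMeasure δ D A := by
  calc ∑' P : D', P.1.gauge δ
      = ∑' P : D', (P.1.gauge δ • Measure.dirac P.1.corner) A := by
        refine tsum_congr fun P => ?_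
        simp [Measure.dirac_apply' _ hA, hsubset P P.2 P.1.corner_mem_toSet]
    _ ≤ ∑' P : D, (P.1.gauge δ • Measure.dirac P.1.corner) A :=
        ENNReal.tsum_mono_subtype (fun P => (P.gauge δ • Measure.dirac P.corner) A) hD'
    _ ≤ coverMeasure δ D A := Measure.le_sum_apply _ A

lemma gauge_le_smul_coverMeasure {D : Set (Cube n)} {P : Cube n} (hP : P ∈ D) {r : ℝ≥0∞}
    (hr : 1 ≤ r) : P.gauge δ ≤ (r • coverMeasure δ D) P.toSet := by
  have hle : P.gauge δ ≤ coverMeasure δ D P.toSet := by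
    simpa using tsum_gauge_le_coverMeasure (δ := δ) (singleton_subset_iff.2 hP)
      P.measurableSet_toSet (by simp)
  exact hle.trans (le_mul_of_one_le_left' hr)

lemma exists_gridCubes_cover_of_hContent_lt (hδ : 0 < δ) {Q : Cube n} {E : Set (Fin n → ℝ)}
    {a : ℝ≥0∞} (h : hContent n δ E < a) (ha : a ≤ Q.gauge δ) :
    ∃ D ⊆ Q.gridCubes, E ⊆ (⋃ P ∈ D, P.toSet) ∧
      ∑' P : D, P.1.gauge δ ≤ 2 ^ n * ENNReal.ofReal (2 ^ δ) * a := by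
  obtain ⟨R, hcover, hsum⟩ := exists_cover_of_hContent_lt h
  have hside (i) : (R i).side ≤ Q.side := by
    by_contra! hlt
    exact ((ENNReal.le_tsum i).trans_lt (hsum.trans_le ha)).not_ge (Cube.gauge_mono hδ.le hlt.le)
  obtain ⟨D, hD, hRD, hDsum⟩ := Cube.exists_gridCubes_cover hδ.le hside
  exact ⟨D, hD, hcover.trans hRD, hDsum.trans (by gcongr)⟩

lemma subset_biUnion_stoppingCubes {Q : Cube n} {E : Set (Fin n → ℝ)} (hEQ : E ⊆ Q.toSet)
    {D : Set (Cube n)} (hD : D ⊆ Q.gridCubes) (hcover : E ⊆ ⋃ C ∈ D, C.toSet) {r : ℝ≥0∞}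
    (hr : 1 ≤ r) (hQ : (r • coverMeasure δ D) Q.toSet < Q.gauge δ) :
    E ⊆ ⋃ P ∈ Q.stoppingCubes δ (r • coverMeasure δ D), P.toSet := by
  intro x hx
  obtain ⟨C, hC, hxC⟩ := mem_iUnion₂.1 (hcover hx)
  obtain ⟨⟨k, z⟩, rfl⟩ := hD hC
  have hheavy : k ∈ Q.heavyLevels δ (r • coverMeasure δ D) x := by
    rw [Cube.heavyLevels, mem_ofPred_eq, ← Cube.gridCube_eq_gridCubeAt hxC]
    exact gauge_le_smul_coverMeasure hC hr
  obtain ⟨P, hP, hxP⟩ := Cube.exists_mem_stoppingCubes hQ (hEQ hx) ⟨k, hheavy⟩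
  exact mem_biUnion hP hxP

lemma mul_hContent_inter_stoppingCube_le (hδ : δ ≠ 0) {Q P : Cube n} {D : Set (Cube n)}
    (hD : D ⊆ Q.gridCubes) {E : Set (Fin n → ℝ)} (hcover : E ⊆ ⋃ C ∈ D, C.toSet) {r : ℝ≥0∞}
    (hr : 1 ≤ r) (hP : P ∈ Q.stoppingCubes δ (r • coverMeasure δ D)) :
    r * hContent n δ (E ∩ P.toSet) ≤ P.gauge δ := by
  let D' : Set (Cube n) := {C ∈ D | C.toSet ⊆ P.toSet}
  have hD'D : D' ⊆ D := sep_subset _ _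
  have : Countable D' := (Q.countable_gridCubes.mono (hD'D.trans hD)).to_subtype
  have hcover' : E ∩ P.toSet ⊆ ⋃ C : D', C.1.toSet := by
    rintro y ⟨hyE, hyP⟩
    obtain ⟨C, hC, hyC⟩ := mem_iUnion₂.1 (hcover hyE)
    have hCP := Cube.subset_of_heavy_of_mem_stoppingCubes hP (hD hC)
      (gauge_le_smul_coverMeasure hC hr) hyC hyP
    exact mem_iUnion_of_mem ⟨C, hC, hCP⟩ hyC
  calc r * hContent n δ (E ∩ P.toSet)
      ≤ r * ∑' C : D', C.1.gauge δ := by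
        gcongr
        exact hContent_le_tsum hδ hcover'
    _ ≤ r * coverMeasure δ D P.toSet := by
        gcongr
        exact tsum_gauge_le_coverMeasure hD'D P.measurableSet_toSet fun C hC => hC.2
    _ ≤ P.gauge δ := (Cube.not_heavy_of_mem_stoppingCubes hP).le

/-- The threshold on `ℋ^δ_∞(E)` relative to `ℓ(Q)^δ` in `exists_sparse_cover`: passing to grid
cubes costs `2 ^ n * 2 ^ δ`, stopping at density `1 / 4` costs `2 ^ δ * 4`, and `2` is gained. -/
def sparseConst (n : ℕ) (δ : ℝ) : ℝ := 2 * (2 ^ δ * 4) * (2 ^ n * 2 ^ δ)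

lemma sparseConst_pos (n : ℕ) (δ : ℝ) : 0 < sparseConst n δ := by
  unfold sparseConst
  positivity

lemma ofReal_sparseConst (n : ℕ) (δ : ℝ) :
    ENNReal.ofReal (sparseConst n δ) =
      2 * (ENNReal.ofReal (2 ^ δ) * 4) * (2 ^ n * ENNReal.ofReal (2 ^ δ)) := by
  have h2δ : (0 : ℝ) ≤ 2 ^ δ := by positivity
  simp [sparseConst, ENNReal.ofReal_mul, h2δ]

lemma one_le_ofReal_two_rpow (hδ : 0 ≤ δ) : 1 ≤ ENNReal.ofReal (2 ^ δ) :=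
  ENNReal.one_le_ofReal.2 (Real.one_le_rpow one_le_two hδ)

lemma one_le_ofReal_sparseConst (n : ℕ) (hδ : 0 ≤ δ) : 1 ≤ ENNReal.ofReal (sparseConst n δ) := by
  have h2δ := one_le_ofReal_two_rpow hδ
  rw [ofReal_sparseConst]
  exact one_le_mul (one_le_mul one_le_two (one_le_mul h2δ (by norm_num)))
    (one_le_mul (one_le_pow₀ one_le_two) h2δ)

lemma exists_gridCubes_cover_of_sparseConst_mul_lt (hδ : 0 < δ) {Q : Cube n}
    {E : Set (Fin n → ℝ)} (hE : ENNReal.ofReal (sparseConst n δ) * hContent n δ E < Q.gauge δ) :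
    ∃ D ⊆ Q.gridCubes, E ⊆ (⋃ P ∈ D, P.toSet) ∧
      2 * (ENNReal.ofReal (2 ^ δ) * (4 * ∑' P : D, P.1.gauge δ)) < Q.gauge δ := by
  set κ := ENNReal.ofReal (sparseConst n δ) with hκ
  have hκ1 : 1 ≤ κ := one_le_ofReal_sparseConst n hδ.le
  have hlt_div (b : ℝ≥0∞) : b < Q.gauge δ / κ ↔ κ * b < Q.gauge δ := by
    rw [ENNReal.lt_div_iff_mul_lt (.inl (zero_lt_one.trans_le hκ1).ne')
      (.inl ENNReal.ofReal_ne_top), mul_comm]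
  obtain ⟨a, hEa, ha⟩ := exists_between ((hlt_div _).2 hE)
  have haQ : κ * a < Q.gauge δ := (hlt_div a).1 ha
  obtain ⟨D, hD, hcover, hsum⟩ := exists_gridCubes_cover_of_hContent_lt hδ hEa
    ((le_mul_of_one_le_left' hκ1).trans haQ.le)
  refine ⟨D, hD, hcover, lt_of_le_of_lt ?_ haQ⟩
  calc 2 * (ENNReal.ofReal (2 ^ δ) * (4 * ∑' P : D, P.1.gauge δ))
      ≤ 2 * (ENNReal.ofReal (2 ^ δ) * (4 * (2 ^ n * ENNReal.ofReal (2 ^ δ) * a))) := by gcongr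
    _ = κ * a := by
        rw [hκ, ofReal_sparseConst]
        ring

lemma exists_sparse_cover (hδ : 0 < δ) {Q : Cube n} {E : Set (Fin n → ℝ)} (hEQ : E ⊆ Q.toSet)
    (hE : ENNReal.ofReal (sparseConst n δ) * hContent n δ E < Q.gauge δ) :
    ∃ S : Set (Cube n), S.Countable ∧ E ⊆ (⋃ P ∈ S, P.toSet) ∧
      (∀ P ∈ S, P.toSet ⊆ Q.toSet ∧ 4 * hContent n δ (E ∩ P.toSet) ≤ P.gauge δ) ∧
      2 * ∑' P : S, P.1.gauge δ ≤ Q.gauge δ := by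
  obtain ⟨D, hD, hcover, hsum⟩ := exists_gridCubes_cover_of_sparseConst_mul_lt hδ hE
  have h4 : (1 : ℝ≥0∞) ≤ 4 := by norm_num
  set μ : Measure (Fin n → ℝ) := (4 : ℝ≥0∞) • coverMeasure δ D
  have hmass : μ Q.toSet ≤ 4 * ∑' P : D, P.1.gauge δ := by
    rw [← coverMeasure_univ]
    exact measure_mono (μ := μ) (subset_univ _)
  have hQ : μ Q.toSet < Q.gauge δ :=
    (hmass.trans ((le_mul_of_one_le_left' (one_le_ofReal_two_rpow hδ.le)).trans
      (le_mul_of_one_le_left' one_le_two))).trans_lt hsum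
  refine ⟨Q.stoppingCubes δ μ, Q.countable_stoppingCubes δ μ,
    subset_biUnion_stoppingCubes hEQ hD hcover h4 hQ, fun P hP => ⟨?_, ?_⟩, ?_⟩
  · exact Cube.toSet_subset_of_mem_stoppingCubes hP
  · exact mul_hContent_inter_stoppingCube_le hδ.ne' hD hcover h4 hP
  · calc 2 * ∑' P : Q.stoppingCubes δ μ, P.1.gauge δ
        ≤ 2 * (ENNReal.ofReal (2 ^ δ) * μ Q.toSet) := by
          gcongr
          exact Cube.tsum_gauge_stoppingCubes_le hδ.le Q μ
      _ ≤ 2 * (ENNReal.ofReal (2 ^ δ) * (4 * ∑' P : D, P.1.gauge δ)) := by gcongr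
      _ ≤ Q.gauge δ := hsum.le

end SparseCover

section ChoquetIntegral

variable {n : ℕ} {δ : ℝ} {f g : (Fin n → ℝ) → ℝ} {E F : Set (Fin n → ℝ)}

lemma integH_mono (hEF : E ⊆ F) (hfg : ∀ x ∈ E, f x ≤ g x) : integH n δ f E ≤ integH n δ g F :=
  lintegral_mono fun _ => hContent_mono fun x hx => ⟨hEF hx.1, hx.2.trans_le (hfg x hx.1)⟩

lemma ofReal_mul_hContent_le_integH (f : (Fin n → ℝ) → ℝ) (E : Set (Fin n → ℝ)) (t : ℝ) :
    ENNReal.ofReal t * hContent n δ {x | x ∈ E ∧ t < f x} ≤ integH n δ f E := by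
  calc ENNReal.ofReal t * hContent n δ {x | x ∈ E ∧ t < f x}
      = ∫⁻ _ in Ioo (0 : ℝ) t, hContent n δ {x | x ∈ E ∧ t < f x} := by
        rw [setLIntegral_const, Real.volume_Ioo, sub_zero, mul_comm]
    _ ≤ ∫⁻ s in Ioo (0 : ℝ) t, hContent n δ {x | x ∈ E ∧ s < f x} :=
        setLIntegral_mono' measurableSet_Ioo fun s hs =>
          hContent_mono fun x hx => ⟨hx.1, hs.2.trans hx.2⟩
    _ ≤ integH n δ f E := lintegral_mono_set fun s hs => hs.1

lemma integH_const_mul {a : ℝ} (ha : 0 < a) (f : (Fin n → ℝ) → ℝ) (E : Set (Fin n → ℝ)) :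
    integH n δ (fun x => a * f x) E = ENNReal.ofReal a * integH n δ f E := by
  calc integH n δ (fun x => a * f x) E
      = ∫⁻ t in (fun t => a * t) '' Ioi 0, hContent n δ {x | x ∈ E ∧ t < a * f x} := by
        rw [image_const_mul_Ioi_zero ha, integH]
    _ = ∫⁻ t in Ioi 0, ENNReal.ofReal |a| * hContent n δ {x | x ∈ E ∧ a * t < a * f x} :=
        lintegral_image_eq_lintegral_abs_deriv_mul measurableSet_Ioi
          (fun t _ => ((hasDerivAt_id t).const_mul a).hasDerivWithinAt.congr_deriv (mul_one a))
          (mul_right_injective₀ ha.ne').injOn _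
    _ = ENNReal.ofReal a * integH n δ f E := by
        simp only [abs_of_pos ha, mul_lt_mul_iff_right₀ ha]
        exact lintegral_const_mul' _ _ ENNReal.ofReal_ne_top

end ChoquetIntegral

section JohnNirenberg

variable {n : ℕ} {δ A : ℝ} {f : (Fin n → ℝ) → ℝ} {c : Cube n → ℝ} {P Q : Cube n}

/-- The mean oscillation of `f` over every cube `Q` about the constant `c Q`, with respect to
`ℋ^δ_∞`, is at most `A`. The normalizing factor `ℋ^δ_∞(Q)` is written `ℓ(Q)^δ`. -/
def MeanOscillationLE (n : ℕ) (δ : ℝ) (f : (Fin n → ℝ) → ℝ) (c : Cube n → ℝ) (A : ℝ) : Prop :=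
  ∀ Q : Cube n, integH n δ (fun x => |f x - c Q|) Q.toSet ≤ ENNReal.ofReal A * Q.gauge δ

lemma MeanOscillationLE.ofReal_mul_hContent_le (hf : MeanOscillationLE n δ f c A) (hA : 0 < A)
    (Q : Cube n) (a : ℝ) :
    ENNReal.ofReal a * hContent n δ {x | x ∈ Q.toSet ∧ a * A < |f x - c Q|} ≤ Q.gauge δ := by
  rw [← ENNReal.mul_le_mul_iff_right (ENNReal.ofReal_pos.2 hA).ne' ENNReal.ofReal_ne_top,
    ← mul_assoc, ← ENNReal.ofReal_mul hA.le, mul_comm A a]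
  exact (ofReal_mul_hContent_le_integH _ _ _).trans (hf Q)

/-- The parts of `P` where `f` is far from `c Q` or from `c P` each carry at most a quarter of the
content of `P`, so some point of `P` avoids both. -/
lemma MeanOscillationLE.abs_sub_le_of_subset (hδ : 0 < δ) (hδn : δ ≤ n)
    (hf : MeanOscillationLE n δ f c A) (hA : 0 < A) (hPQ : P.toSet ⊆ Q.toSet) {t : ℝ}
    (hP : 4 * hContent n δ ({x | x ∈ Q.toSet ∧ t < |f x - c Q|} ∩ P.toSet) ≤ P.gauge δ) :
    |c P - c Q| ≤ t + 4 * A := by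
  set E : Set (Fin n → ℝ) := {x | x ∈ Q.toSet ∧ t < |f x - c Q|}
  set F : Set (Fin n → ℝ) := {x | x ∈ P.toSet ∧ 4 * A < |f x - c P|}
  have hF : 4 * hContent n δ F ≤ P.gauge δ := by
    simpa using hf.ofReal_mul_hContent_le hA P 4
  have hnot : ¬ P.toSet ⊆ (E ∩ P.toSet) ∪ F := by
    intro hsub
    have hle : 4 * P.gauge δ ≤ 2 * P.gauge δ := by
      calc 4 * P.gauge δ ≤ 4 * (hContent n δ (E ∩ P.toSet) + hContent n δ F) := by
            rw [← hContent_toSet hδ hδn P]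
            gcongr
            exact (hContent_mono hsub).trans (hContent_union_le hδ.ne' _ _)
        _ ≤ P.gauge δ + P.gauge δ := by
            rw [mul_add]
            gcongr
        _ = 2 * P.gauge δ := (two_mul _).symm
    rw [ENNReal.mul_le_mul_iff_left P.gauge_ne_zero P.gauge_ne_top] at hle
    norm_num at hle
  obtain ⟨x, hxP, hx⟩ := not_subset.1 hnot
  have hxQ : |f x - c Q| ≤ t := not_lt.1 fun h => hx (.inl ⟨⟨hPQ hxP, h⟩, hxP⟩)
  have hxP' : |f x - c P| ≤ 4 * A := not_lt.1 fun h => hx (.inr ⟨hxP, h⟩)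
  calc |c P - c Q| ≤ |c P - f x| + |f x - c Q| := abs_sub_le _ _ _
    _ ≤ t + 4 * A := by
        rw [abs_sub_comm, add_comm]
        gcongr

/-- The step, in units of the mean oscillation, over which the content of the superlevel sets
halves in `MeanOscillationLE.john_nirenberg`: stopping happens at level
`2 * sparseConst n δ`, and `MeanOscillationLE.abs_sub_le_of_subset` adds `4`. -/
def johnNirenbergConst (n : ℕ) (δ : ℝ) : ℝ := 2 * sparseConst n δ + 4

lemma johnNirenbergConst_pos (n : ℕ) (δ : ℝ) : 0 < johnNirenbergConst n δ := by
  have := sparseConst_pos n δ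
  unfold johnNirenbergConst
  positivity

lemma MeanOscillationLE.sparseConst_mul_hContent_lt (hf : MeanOscillationLE n δ f c A)
    (hA : 0 < A) (Q : Cube n) :
    ENNReal.ofReal (sparseConst n δ) *
      hContent n δ {x | x ∈ Q.toSet ∧ 2 * sparseConst n δ * A < |f x - c Q|} < Q.gauge δ := by
  have hweak := hf.ofReal_mul_hContent_le hA Q (2 * sparseConst n δ)
  rw [ENNReal.ofReal_mul zero_le_two, ENNReal.ofReal_ofNat, mul_assoc] at hweak
  refine lt_of_le_of_lt ?_ (ENNReal.half_lt_self Q.gauge_ne_zero Q.gauge_ne_top)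
  rwa [ENNReal.le_div_iff_mul_le (.inl two_ne_zero) (.inl ENNReal.ofNat_ne_top), mul_comm]

lemma MeanOscillationLE.exists_superlevel_cover (hδ : 0 < δ) (hδn : δ ≤ n)
    (hf : MeanOscillationLE n δ f c A) (hA : 0 < A) (Q : Cube n) :
    ∃ S : Set (Cube n), S.Countable ∧ 2 * ∑' P : S, P.1.gauge δ ≤ Q.gauge δ ∧
      ∀ t ≥ 0, {x | x ∈ Q.toSet ∧ t + johnNirenbergConst n δ * A < |f x - c Q|} ⊆
        ⋃ P ∈ S, {x | x ∈ P.toSet ∧ t < |f x - c P|} := by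
  obtain ⟨S, hcount, hcover, hS, hsum⟩ := exists_sparse_cover hδ
    (fun x hx => hx.1) (hf.sparseConst_mul_hContent_lt hA Q)
  refine ⟨S, hcount, hsum, ?_⟩
  rintro t ht x ⟨hxQ, hx⟩
  rw [johnNirenbergConst, add_mul] at hx
  obtain ⟨P, hP, hxP⟩ := mem_iUnion₂.1 (hcover ⟨hxQ, by linarith⟩)
  refine mem_biUnion hP ⟨hxP, ?_⟩
  have hPQ := hf.abs_sub_le_of_subset hδ hδn hA (hS P hP).1 (hS P hP).2
  linarith [abs_sub_le (f x) (c P) (c Q)]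

lemma MeanOscillationLE.john_nirenberg (hδ : 0 < δ) (hδn : δ ≤ n)
    (hf : MeanOscillationLE n δ f c A) (hA : 0 < A) (m : ℕ) (Q : Cube n) :
    2 ^ m * hContent n δ {x | x ∈ Q.toSet ∧ m * (johnNirenbergConst n δ * A) < |f x - c Q|} ≤
      Q.gauge δ := by
  set L := johnNirenbergConst n δ * A
  have hL : 0 ≤ L := (mul_pos (johnNirenbergConst_pos n δ) hA).le
  induction m generalizing Q with
  | zero =>
    rw [pow_zero, one_mul, ← hContent_toSet hδ hδn]
    exact hContent_mono fun x hx => hx.1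
  | succ m ih =>
    obtain ⟨S, hcount, hsum, hcover⟩ := hf.exists_superlevel_cover hδ hδn hA Q
    calc 2 ^ (m + 1) * hContent n δ {x | x ∈ Q.toSet ∧ (m + 1 : ℕ) * L < |f x - c Q|}
        ≤ 2 ^ (m + 1) * ∑' P : S, hContent n δ {x | x ∈ P.1.toSet ∧ m * L < |f x - c P|} := by
          gcongr
          rw [Nat.cast_succ, add_one_mul]
          exact (hContent_mono (hcover (m * L) (by positivity))).trans
            (hContent_biUnion_le hδ.ne' hcount _)
      _ = 2 * ∑' P : S, 2 ^ m * hContent n δ {x | x ∈ P.1.toSet ∧ m * L < |f x - c P|} := by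
          rw [ENNReal.tsum_mul_left]
          ring
      _ ≤ 2 * ∑' P : S, P.1.gauge δ := by
          gcongr with P
          exact ih P
      _ ≤ Q.gauge δ := hsum

end JohnNirenberg

section ExpIntegrability

variable {n : ℕ} {δ : ℝ} {E : Set (Fin n → ℝ)} {g : (Fin n → ℝ) → ℝ} {β L : ℝ} {M : ℝ≥0∞}

lemma ofReal_sq_mul_hContent_exp_le (hβ : 0 ≤ β) (hβL : β * L ≤ Real.log 2 / 2)
    (hdecay : ∀ m : ℕ, 2 ^ m * hContent n δ {x | x ∈ E ∧ m * L < g x} ≤ M) {t : ℝ} (ht : 1 ≤ t) :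
    ENNReal.ofReal (t ^ 2) * hContent n δ {x | x ∈ E ∧ t < Real.exp (β * g x)} ≤ 2 * M := by
  obtain ⟨m, hm, hm'⟩ := exists_nat_pow_near (one_le_pow₀ ht (n := 2)) one_lt_two
  have ht0 : 0 < t := zero_lt_one.trans_le ht
  have hlog : m * Real.log 2 ≤ 2 * Real.log t := by
    simpa using Real.log_le_log (by positivity) hm
  have hsubset : {x | x ∈ E ∧ t < Real.exp (β * g x)} ⊆ {x | x ∈ E ∧ m * L < g x} := by
    rintro x ⟨hxE, hx⟩
    refine ⟨hxE, lt_of_mul_lt_mul_left ?_ hβ⟩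
    calc β * (m * L) = m * (β * L) := by ring
      _ ≤ m * (Real.log 2 / 2) := by gcongr
      _ ≤ Real.log t := by linarith
      _ < β * g x := (Real.log_lt_iff_lt_exp ht0).2 hx
  have hpow : ENNReal.ofReal (t ^ 2) ≤ 2 * 2 ^ m := by
    refine ENNReal.ofReal_le_of_le_toReal ?_
    simpa [pow_succ'] using hm'.le
  calc ENNReal.ofReal (t ^ 2) * hContent n δ {x | x ∈ E ∧ t < Real.exp (β * g x)}
      ≤ 2 * 2 ^ m * hContent n δ {x | x ∈ E ∧ m * L < g x} :=
        mul_le_mul' hpow (hContent_mono hsubset)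
    _ ≤ 2 * M := by
        rw [mul_assoc]
        gcongr
        exact hdecay m

lemma lintegral_Ioi_one_inv_sq : ∫⁻ t in Ioi (1 : ℝ), ENNReal.ofReal (t ^ (-2 : ℝ)) = 1 := by
  have hint : IntegrableOn (fun t : ℝ => t ^ (-2 : ℝ)) (Ioi 1) :=
    integrableOn_Ioi_rpow_of_lt (by norm_num) one_pos
  have hnonneg : ∀ t ∈ Ioi (1 : ℝ), 0 ≤ t ^ (-2 : ℝ) := fun t ht =>
    Real.rpow_nonneg (zero_lt_one.trans ht).le _
  rw [← ofReal_integral_eq_lintegral_ofReal hint (ae_restrict_of_forall_mem measurableSet_Ioi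
    hnonneg), integral_Ioi_rpow_of_lt (by norm_num) one_pos]
  norm_num

lemma integH_exp_le_of_decay (hβ : 0 ≤ β) (hβL : β * L ≤ Real.log 2 / 2)
    (hE : hContent n δ E ≤ M)
    (hdecay : ∀ m : ℕ, 2 ^ m * hContent n δ {x | x ∈ E ∧ m * L < g x} ≤ M) :
    integH n δ (fun x => Real.exp (β * g x)) E ≤ 3 * M := by
  let H (t : ℝ) : ℝ≥0∞ := hContent n δ {x | x ∈ E ∧ t < Real.exp (β * g x)}
  have htail : ∀ t ∈ Ioi (1 : ℝ), H t ≤ ENNReal.ofReal (t ^ (-2 : ℝ)) * (2 * M) := by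
    intro t ht
    have ht0 : 0 < t := zero_lt_one.trans ht
    have hinv : t ^ (-2 : ℝ) * t ^ 2 = 1 := by
      rw [← Real.rpow_natCast, ← Real.rpow_add ht0]
      norm_num
    calc H t = ENNReal.ofReal (t ^ (-2 : ℝ)) * (ENNReal.ofReal (t ^ 2) * H t) := by
          rw [← mul_assoc, ← ENNReal.ofReal_mul (by positivity), hinv, ENNReal.ofReal_one, one_mul]
      _ ≤ ENNReal.ofReal (t ^ (-2 : ℝ)) * (2 * M) :=
          mul_le_mul' le_rfl (ofReal_sq_mul_hContent_exp_le hβ hβL hdecay (mem_Ioi.1 ht).le)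
  calc integH n δ (fun x => Real.exp (β * g x)) E
      = ∫⁻ t in Ioc 0 1 ∪ Ioi 1, H t := by rw [Ioc_union_Ioi_eq_Ioi zero_le_one, integH]
    _ ≤ (∫⁻ t in Ioc 0 1, H t) + ∫⁻ t in Ioi 1, H t := lintegral_union_le _ _ _
    _ ≤ (∫⁻ _ in Ioc (0 : ℝ) 1, M) + ∫⁻ t in Ioi (1 : ℝ), ENNReal.ofReal (t ^ (-2 : ℝ)) * (2 * M) :=
        add_le_add (lintegral_mono fun t => (hContent_mono fun x hx => hx.1).trans hE)
          (setLIntegral_mono' measurableSet_Ioi htail)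
    _ = 3 * M := by
        rw [setLIntegral_const, Real.volume_Ioc, lintegral_mul_const _ (by fun_prop),
          lintegral_Ioi_one_inv_sq, sub_zero, ENNReal.ofReal_one]
        ring

lemma MeanOscillationLE.integH_exp_le (hδ : 0 < δ) (hδn : δ ≤ n) {f : (Fin n → ℝ) → ℝ}
    {c : Cube n → ℝ} {A : ℝ} (hf : MeanOscillationLE n δ f c A) (hA : 0 < A)
    (hβ : |β| * (johnNirenbergConst n δ * A) ≤ Real.log 2 / 2) (Q : Cube n) :
    integH n δ (fun x => Real.exp (β * f x)) Q.toSet ≤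
      ENNReal.ofReal (Real.exp (β * c Q)) * (3 * Q.gauge δ) := by
  have hpointwise (x : Fin n → ℝ) :
      Real.exp (β * f x) ≤ Real.exp (β * c Q) * Real.exp (|β| * |f x - c Q|) := by
    rw [← Real.exp_add, ← abs_mul, Real.exp_le_exp]
    linarith [le_abs_self (β * (f x - c Q))]
  calc integH n δ (fun x => Real.exp (β * f x)) Q.toSet
      ≤ integH n δ (fun x => Real.exp (β * c Q) * Real.exp (|β| * |f x - c Q|)) Q.toSet :=
        integH_mono subset_rfl fun x _ => hpointwise x
    _ = ENNReal.ofReal (Real.exp (β * c Q)) *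
          integH n δ (fun x => Real.exp (|β| * |f x - c Q|)) Q.toSet :=
        integH_const_mul (Real.exp_pos _) _ _
    _ ≤ ENNReal.ofReal (Real.exp (β * c Q)) * (3 * Q.gauge δ) := by
        gcongr
        exact integH_exp_le_of_decay (abs_nonneg β) hβ (hContent_toSet hδ hδn Q).le
          fun m => hf.john_nirenberg hδ hδn hA m Q

end ExpIntegrability

section Weights

variable {n : ℕ} {δ p A β : ℝ} {f : (Fin n → ℝ) → ℝ} {c : Cube n → ℝ}

lemma QuasiCont.continuous_comp {φ : ℝ → ℝ} (hφ : Continuous φ) (hf : QuasiCont n δ f) :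
    QuasiCont n δ (fun x => φ (f x)) := by
  intro ε hε
  obtain ⟨O, hO, hcontent, hcont⟩ := hf ε hε
  exact ⟨O, hO, hcontent, hφ.comp_continuousOn hcont⟩

lemma AEContent.of_forall (hδ : δ ≠ 0) {P : (Fin n → ℝ) → Prop} (h : ∀ x, P x) :
    AEContent n δ P := by
  simp [AEContent, h, hContent_empty n hδ]

lemma exists_cube_superset_of_isCompact {K : Set (Fin n → ℝ)} (hK : IsCompact K) :
    ∃ Q : Cube n, K ⊆ Q.toSet := by
  obtain ⟨r, hr, hKr⟩ := hK.isBounded.subset_closedBall_lt 0 0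
  refine ⟨⟨fun _ => -r, 2 * r + 1, by positivity⟩, fun x hx i => ?_⟩
  have hxi : |x i| ≤ r := (norm_le_pi_norm x i).trans (by simpa using hKr hx)
  obtain ⟨hlower, hupper⟩ := abs_le.1 hxi
  exact ⟨hlower, by dsimp only; linarith⟩

lemma exists_meanOscillationLE_of_bmoNorm_lt (hδ : 0 < δ) (hδn : δ ≤ n)
    (h : bmoNorm n δ f < ENNReal.ofReal A) : ∃ c, MeanOscillationLE n δ f c A := by
  have hcube (Q : Cube n) : ∃ a : ℝ,
      integH n δ (fun x => |f x - a|) Q.toSet ≤ ENNReal.ofReal A * Q.gauge δ := by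
    obtain ⟨a, ha⟩ := iInf_lt_iff.1 ((le_iSup (fun Q : Cube n => ⨅ a : ℝ,
      integH n δ (fun x => |f x - a|) Q.toSet / hContent n δ Q.toSet) Q).trans_lt h)
    rw [hContent_toSet hδ hδn] at ha
    exact ⟨a, (ENNReal.div_le_iff Q.gauge_ne_zero Q.gauge_ne_top).1 ha.le⟩
  choose c hc using hcube
  exact ⟨c, hc⟩

lemma MeanOscillationLE.integH_exp_div_le (hδ : 0 < δ) (hδn : δ ≤ n)
    (hf : MeanOscillationLE n δ f c A) (hA : 0 < A)
    (hβ : |β| * (johnNirenbergConst n δ * A) ≤ Real.log 2 / 2) (Q : Cube n) :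
    integH n δ (fun x => Real.exp (β * f x)) Q.toSet / hContent n δ Q.toSet ≤
      ENNReal.ofReal (3 * Real.exp (β * c Q)) := by
  rw [hContent_toSet hδ hδn, ENNReal.div_le_iff Q.gauge_ne_zero Q.gauge_ne_top, mul_comm 3,
    ENNReal.ofReal_mul (Real.exp_pos _).le, ENNReal.ofReal_ofNat, mul_assoc]
  exact hf.integH_exp_le hδ hδn hA hβ Q

lemma MeanOscillationLE.isWeight_exp (hδ : 0 < δ) (hδn : δ ≤ n) (hqc : QuasiCont n δ f)
    (hf : MeanOscillationLE n δ f c A) (hA : 0 < A)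
    (hβ : |β| * (johnNirenbergConst n δ * A) ≤ Real.log 2 / 2) :
    IsWeight n δ (fun x => Real.exp (β * f x)) := by
  refine ⟨⟨hqc.continuous_comp (φ := fun y => Real.exp (β * y)) (by fun_prop), fun K hK => ?_⟩,
    .of_forall hδ.ne' fun x => Real.exp_pos _⟩
  obtain ⟨Q, hKQ⟩ := exists_cube_superset_of_isCompact hK
  calc integH n δ (fun x => |Real.exp (β * f x)|) K
      ≤ integH n δ (fun x => Real.exp (β * f x)) Q.toSet :=
        integH_mono hKQ fun x _ => (Real.abs_exp _).le
    _ ≤ ENNReal.ofReal (Real.exp (β * c Q)) * (3 * Q.gauge δ) := hf.integH_exp_le hδ hδn hA hβ Q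
    _ < ⊤ := ENNReal.mul_lt_top ENNReal.ofReal_lt_top
        (ENNReal.mul_lt_top (by simp) Q.gauge_ne_top.lt_top)

lemma MeanOscillationLE.apConst_exp_le (hδ : 0 < δ) (hδn : δ ≤ n) (hp : 1 < p)
    (hf : MeanOscillationLE n δ f c A) (hA : 0 < A)
    (hβ : |β| * (johnNirenbergConst n δ * A) ≤ Real.log 2 / 2)
    (hβp : |β / (p - 1)| * (johnNirenbergConst n δ * A) ≤ Real.log 2 / 2) :
    apConst n δ p (fun x => Real.exp (β * f x)) ≤ ENNReal.ofReal (3 ^ p) := by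
  have hp1 : 0 < p - 1 := sub_pos.2 hp
  have hdual : (fun x => Real.exp (β * f x) ^ (-(1 / (p - 1)))) =
      fun x => Real.exp (-(β / (p - 1)) * f x) := by
    ext x
    rw [← Real.exp_mul]
    ring_nf
  refine iSup_le fun Q => ?_
  rw [hdual]
  have hcancel : Real.exp (β * c Q) * Real.exp (-(β / (p - 1)) * c Q) ^ (p - 1) = 1 := by
    rw [← Real.exp_mul, ← Real.exp_add, Real.exp_eq_one_iff]
    field_simp
    ring
  calc _ ≤ ENNReal.ofReal (3 * Real.exp (β * c Q)) *
        ENNReal.ofReal (3 * Real.exp (-(β / (p - 1)) * c Q)) ^ (p - 1) := by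
        gcongr
        · exact hf.integH_exp_div_le hδ hδn hA hβ Q
        · exact hf.integH_exp_div_le hδ hδn hA (by rwa [abs_neg]) Q
    _ = ENNReal.ofReal (3 ^ p) := by
        rw [ENNReal.ofReal_rpow_of_pos (by positivity), ← ENNReal.ofReal_mul (by positivity),
          Real.mul_rpow (by norm_num) (Real.exp_pos _).le, mul_mul_mul_comm, hcancel, mul_one,
          ← Real.rpow_one_add' (by norm_num) (by linarith), add_sub_cancel]

lemma MeanOscillationLE.memAp_exp (hδ : 0 < δ) (hδn : δ ≤ n) (hp : 1 < p) (hqc : QuasiCont n δ f)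
    (hf : MeanOscillationLE n δ f c A) (hA : 0 < A) (hβ0 : 0 ≤ β)
    (hβ : β * (johnNirenbergConst n δ * A) ≤ Real.log 2 / 2 * min 1 (p - 1)) :
    MemAp n δ p (fun x => Real.exp (β * f x)) := by
  have hp1 : 0 < p - 1 := sub_pos.2 hp
  have hlog : 0 ≤ Real.log 2 / 2 := by positivity
  have hβ1 : |β| * (johnNirenbergConst n δ * A) ≤ Real.log 2 / 2 := by
    rw [abs_of_nonneg hβ0]
    exact hβ.trans (mul_le_of_le_one_right hlog (min_le_left _ _))
  have hβp : |β / (p - 1)| * (johnNirenbergConst n δ * A) ≤ Real.log 2 / 2 := by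
    rw [abs_of_nonneg (div_nonneg hβ0 hp1.le), div_mul_eq_mul_div, div_le_iff₀ hp1]
    exact hβ.trans (mul_le_mul_of_nonneg_left (min_le_right _ _) hlog)
  exact ⟨hf.isWeight_exp hδ hδn hqc hA hβ1,
    (hf.apConst_exp_le hδ hδn hp hA hβ1 hβp).trans_lt ENNReal.ofReal_lt_top⟩

end Weights

/-- exponentials of (normalized) BMO functions are A_{p,δ} weights. -/
theorem stmt1 (n : ℕ) (hn : 1 ≤ n) (δ p : ℝ) (hδ0 : 0 < δ) (hδn : δ ≤ n) (hp : 1 < p) :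
    ∃ c : ℝ, 0 < c ∧ ∀ f : (Fin n → ℝ) → ℝ, MemBMO n δ f → bmoNorm n δ f ≠ 0 →
      MemAp n δ p (fun x => Real.exp (c * f x / (bmoNorm n δ f).toReal)) := by
  have hJ : 0 < johnNirenbergConst n δ := johnNirenbergConst_pos n δ
  have hmin : 0 < min 1 (p - 1) := lt_min one_pos (sub_pos.2 hp)
  refine ⟨Real.log 2 / (4 * johnNirenbergConst n δ) * min 1 (p - 1), by positivity,
    fun f hf hne => ?_⟩
  set B := (bmoNorm n δ f).toReal
  have hB : 0 < B := ENNReal.toReal_pos hne hf.2.ne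
  have hlt : bmoNorm n δ f < ENNReal.ofReal (2 * B) := by
    rw [ENNReal.lt_ofReal_iff_toReal_lt hf.2.ne]
    linarith
  obtain ⟨a, ha⟩ := exists_meanOscillationLE_of_bmoNorm_lt hδ0 hδn hlt
  simp only [mul_div_right_comm _ _ B]
  refine ha.memAp_exp hδ0 hδn hp hf.1.1 (by positivity) (by positivity) (le_of_eq ?_)
  field_simp
  norm_num
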